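/- arXiv:2309.16766 — 4 statements merged into one kernel-verified Lean document; each statement's English description precedes it below -/
import Mathlib

section
/- Carlson's theorem (Banach-space-valued, exponential-ceiling bound): Let X be a complex Banach space and let f : ℂ → X be entire (complex-differentiable at every point of ℂ). Suppose there exist constants α, β > 0 such that for all z ∈ ℂ, ‖f(z)‖ ≤ α · exp(β · ⌈|Re z|⌉), where ⌈·⌉ denotes the ceiling of the real number |Re z|. If f(n) = 0 for every integer n, then f(z) = 0 for all z ∈ ℂ. -/
/-!
Let `q` be the quotient of `f` by `(1 + z) sin (π z) / z`, the sine with its zero at the origin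
moved to `-1`. The zeros of `f` make `q` holomorphic in the right half-plane; `q` still has
exponential type there, and it decays exponentially along the imaginary axis because `|sin (π i y)|`
grows like `exp (π |y|)`. Multiplying `q` by `exp (-δ z log (1 + z))` with `δ` small spends the
decay on the imaginary axis to gain superexponential decay on the positive real axis, so the
Phragmén–Lindelöf principle forces `q = 0`.
-/

open Filter Topology Set Complex Asymptotics
open scoped Real

section SimpleZeroQuotient

variable {E : Type*} [NormedAddCommGroup E] [NormedSpace ℂ E] {f : ℂ → E} {g : ℂ → ℂ} {U : Set ℂ}
  {z : ℂ}

open Classical in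
/-- The quotient `f / g`, continued to the simple zeros of `g` by l'Hôpital's rule. The value at a
zero of `g` is meaningful only if `f` vanishes there and `deriv g` does not. -/
noncomputable def simpleZeroQuotient (f : ℂ → E) (g : ℂ → ℂ) (z : ℂ) : E :=
  if g z = 0 then (deriv g z)⁻¹ • deriv f z else (g z)⁻¹ • f z

theorem simpleZeroQuotient_of_ne_zero (hgz : g z ≠ 0) :
    simpleZeroQuotient f g z = (g z)⁻¹ • f z :=
  if_neg hgz

theorem norm_simpleZeroQuotient_le (hgz : 1 ≤ ‖g z‖) : ‖simpleZeroQuotient f g z‖ ≤ ‖f z‖ := by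
  have hgz₀ : g z ≠ 0 := norm_pos_iff.1 (one_pos.trans_le hgz)
  rw [simpleZeroQuotient_of_ne_zero hgz₀, norm_smul, norm_inv]
  exact mul_le_of_le_one_left (norm_nonneg _) (inv_le_one_of_one_le₀ hgz)

theorem simpleZeroQuotient_eventuallyEq_dslope (hfz : f z = 0) (hgz : g z = 0)
    (hg' : deriv g z ≠ 0) :
    simpleZeroQuotient f g =ᶠ[𝓝 z] fun w => (dslope g z w)⁻¹ • dslope f z w := by
  have hg_ne : ∀ᶠ w in 𝓝[≠] z, g w ≠ 0 :=
    (differentiableAt_of_deriv_ne_zero hg').hasDerivAt.eventually_ne hg'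
  filter_upwards [eventually_nhdsWithin_iff.1 hg_ne] with w hw
  rcases eq_or_ne w z with rfl | hwz
  · simp only [simpleZeroQuotient, hgz, if_true, dslope_same]
  · have hsub : w - z ≠ 0 := sub_ne_zero.2 hwz
    rw [simpleZeroQuotient_of_ne_zero (hw hwz), ← sub_smul_dslope_of_zero hgz w,
      ← sub_smul_dslope_of_zero hfz w, smul_smul, smul_eq_mul, mul_inv_rev,
      inv_mul_cancel_right₀ hsub]

theorem differentiableAt_simpleZeroQuotient [CompleteSpace E] (hU : U ∈ 𝓝 z)
    (hf : DifferentiableOn ℂ f U) (hg : DifferentiableOn ℂ g U)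
    (hzero : g z = 0 → f z = 0 ∧ deriv g z ≠ 0) :
    DifferentiableAt ℂ (simpleZeroQuotient f g) z := by
  by_cases hgz : g z = 0
  · obtain ⟨hfz, hg'⟩ := hzero hgz
    have hdf := ((differentiableOn_dslope hU).2 hf).differentiableAt hU
    have hdg := ((differentiableOn_dslope hU).2 hg).differentiableAt hU
    exact ((hdg.inv (by rwa [dslope_same])).smul hdf).congr_of_eventuallyEq
      (simpleZeroQuotient_eventuallyEq_dslope hfz hgz hg')
  · have hgd := hg.differentiableAt hU
    refine ((hgd.inv hgz).smul (hf.differentiableAt hU)).congr_of_eventuallyEq ?_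
    filter_upwards [hgd.continuousAt.eventually_ne hgz] with w hw
    exact simpleZeroQuotient_of_ne_zero hw

theorem diffContOnCl_simpleZeroQuotient [CompleteSpace E] (hU : IsOpen U)
    (hf : DiffContOnCl ℂ f U) (hg : DiffContOnCl ℂ g U)
    (hzero : ∀ z ∈ closure U, g z = 0 → z ∈ U ∧ f z = 0 ∧ deriv g z ≠ 0) :
    DiffContOnCl ℂ (simpleZeroQuotient f g) U := by
  have hdiff : ∀ z ∈ U, DifferentiableAt ℂ (simpleZeroQuotient f g) z := fun z hz =>
    differentiableAt_simpleZeroQuotient (hU.mem_nhds hz) hf.differentiableOn hg.differentiableOn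
      fun hgz => (hzero z (subset_closure hz) hgz).2
  refine ⟨fun z hz => (hdiff z hz).differentiableWithinAt, fun z hz => ?_⟩
  by_cases hgz : g z = 0
  · exact (hdiff z (hzero z hz hgz).1).continuousAt.continuousWithinAt
  · have hgc := hg.continuousOn z hz
    refine ((hgc.inv₀ hgz).smul (hf.continuousOn z hz)).congr_of_eventuallyEq ?_
      (simpleZeroQuotient_of_ne_zero hgz)
    filter_upwards [hgc.eventually_ne hgz] with w hw
    exact simpleZeroQuotient_of_ne_zero hw

end SimpleZeroQuotient

section Sine

theorem norm_sin_sq (z : ℂ) : ‖sin z‖ ^ 2 = Real.sin z.re ^ 2 + Real.sinh z.im ^ 2 := by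
  rw [sin_eq, ← normSq_eq_norm_sq, ← ofReal_sin, ← ofReal_cos, ← ofReal_sinh, ← ofReal_cosh,
    ← ofReal_mul, ← ofReal_mul, normSq_add_mul_I, mul_pow, mul_pow, Real.cosh_sq, Real.cos_sq']
  ring

theorem two_mul_norm_le_norm_sin_pi_mul {z : ℂ} (hz : |z.re| ≤ 1 / 2) :
    2 * ‖z‖ ≤ ‖sin (π * z)‖ := by
  have hre : 2 * |z.re| ≤ |Real.sin (π * z.re)| := by
    have hle : |π * z.re| ≤ π / 2 := by
      rw [abs_mul, abs_of_pos Real.pi_pos]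
      linarith [mul_le_mul_of_nonneg_left hz Real.pi_pos.le]
    calc 2 * |z.re| = 2 / π * |π * z.re| := by
          rw [abs_mul, abs_of_pos Real.pi_pos]
          field_simp
      _ ≤ |Real.sin (π * z.re)| := Real.mul_abs_le_abs_sin hle
  have him : 2 * |z.im| ≤ |Real.sinh (π * z.im)| := by
    calc 2 * |z.im| ≤ π * |z.im| := by gcongr; exact Real.two_le_pi
      _ = |π * z.im| := by rw [abs_mul, abs_of_pos Real.pi_pos]
      _ ≤ Real.sinh |π * z.im| := Real.self_le_sinh_iff.2 (abs_nonneg _)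
      _ = |Real.sinh (π * z.im)| := (Real.abs_sinh _).symm
  refine le_of_sq_le_sq ?_ (norm_nonneg _)
  calc (2 * ‖z‖) ^ 2 = (2 * |z.re|) ^ 2 + (2 * |z.im|) ^ 2 := by
        rw [mul_pow, mul_pow, mul_pow, sq_abs, sq_abs, ← normSq_eq_norm_sq, normSq_apply]
        ring
    _ ≤ |Real.sin (π * z.re)| ^ 2 + |Real.sinh (π * z.im)| ^ 2 := by gcongr
    _ = ‖sin (π * z)‖ ^ 2 := by rw [norm_sin_sq, re_ofReal_mul, im_ofReal_mul, sq_abs, sq_abs]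

theorem two_mul_norm_sub_intCast_le_norm_sin_pi_mul {z : ℂ} {n : ℤ} (hz : |z.re - n| ≤ 1 / 2) :
    2 * ‖z - n‖ ≤ ‖sin (π * z)‖ := by
  have hperiod : ‖sin (π * (z - n))‖ = ‖sin (π * z)‖ := by
    rw [mul_sub, mul_comm (π : ℂ) n, sin_antiperiodic.sub_int_mul_eq]
    simp
  rw [← hperiod]
  exact two_mul_norm_le_norm_sin_pi_mul (by simpa using hz)

/-- The entire function `(1 + z) sin (π z) / z`. Compared with `sin (π z)`, its zero at the origin
is moved to `-1`, out of the closed right half-plane, without changing the growth. -/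
noncomputable def shiftedSin (z : ℂ) : ℂ := (1 + z) * dslope (fun w : ℂ => sin (π * w)) 0 z

theorem mul_shiftedSin (z : ℂ) : z * shiftedSin z = (1 + z) * sin (π * z) := by
  have h := sub_smul_dslope_of_zero (f := fun w : ℂ => sin (π * w)) (a := 0) (by simp) z
  rw [shiftedSin, mul_left_comm, ← h, sub_zero, smul_eq_mul]

theorem hasDerivAt_sin_pi_mul (z : ℂ) :
    HasDerivAt (fun w : ℂ => sin (π * w)) (cos (π * z) * π) z := by
  simpa using ((hasDerivAt_id z).const_mul (π : ℂ)).csin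

theorem differentiable_shiftedSin : Differentiable ℂ shiftedSin := by
  have hsin : Differentiable ℂ fun w : ℂ => sin (π * w) := by fun_prop
  have hslope := (differentiableOn_dslope (univ_mem (f := 𝓝 0))).2 hsin.differentiableOn
  exact (differentiable_id.const_add 1).mul (differentiableOn_univ.1 hslope)

theorem shiftedSin_zero : shiftedSin 0 = π := by
  simp [shiftedSin, dslope_same, (hasDerivAt_sin_pi_mul 0).deriv]

theorem exists_natCast_of_shiftedSin_eq_zero {z : ℂ} (hre : 0 ≤ z.re) (hz : shiftedSin z = 0) :
    ∃ n : ℕ, 0 < n ∧ z = n := by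
  have hne : 1 + z ≠ 0 := fun h => by
    have := congrArg re h
    simp only [add_re, one_re, zero_re] at this
    linarith
  have hsin : sin (π * z) = 0 := by
    have h := mul_shiftedSin z
    rw [hz, mul_zero, eq_comm, mul_eq_zero] at h
    exact h.resolve_left hne
  obtain ⟨k, hk⟩ := sin_eq_zero_iff.1 hsin
  obtain rfl : z = k := mul_left_cancel₀ (ofReal_ne_zero.2 Real.pi_ne_zero) (by rw [hk, mul_comm])
  lift k to ℕ using by simpa using hre
  refine ⟨k, Nat.pos_of_ne_zero ?_, rfl⟩
  rintro rfl
  simp [shiftedSin_zero, Real.pi_ne_zero] at hz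

theorem deriv_shiftedSin_natCast_ne_zero {n : ℕ} (hn : shiftedSin n = 0) :
    deriv shiftedSin n ≠ 0 := by
  have hleft : HasDerivAt (fun w => w * shiftedSin w) (n * deriv shiftedSin n) n := by
    simpa [hn] using (hasDerivAt_id (n : ℂ)).fun_mul (differentiable_shiftedSin n).hasDerivAt
  have hsin : sin (π * n) = 0 := by rw [mul_comm]; exact sin_nat_mul_pi n
  have hright : HasDerivAt (fun w : ℂ => (1 + w) * sin (π * w))
      ((1 + n) * (cos (π * n) * π)) n := by
    simpa [hsin] using ((hasDerivAt_id (n : ℂ)).const_add 1).fun_mul (hasDerivAt_sin_pi_mul n)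
  have hcos : cos (π * n) ≠ 0 := fun h => by simpa [hsin, h] using sin_sq_add_cos_sq (π * n : ℂ)
  have hn₁ : (1 + n : ℂ) ≠ 0 := by exact_mod_cast (Nat.one_add n).trans_ne n.succ_ne_zero
  rw [funext mul_shiftedSin] at hleft
  refine right_ne_zero_of_mul (a := (n : ℂ)) ?_
  rw [hleft.unique hright]
  exact mul_ne_zero hn₁ (mul_ne_zero hcos (ofReal_ne_zero.2 Real.pi_ne_zero))

theorem norm_sin_pi_mul_le_norm_shiftedSin {z : ℂ} (hre : 0 ≤ z.re) :
    ‖sin (π * z)‖ ≤ ‖shiftedSin z‖ := by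
  rcases eq_or_ne z 0 with rfl | hz
  · simp
  have hle : ‖z‖ ≤ ‖1 + z‖ := by
    refine le_of_sq_le_sq ?_ (norm_nonneg _)
    rw [← normSq_eq_norm_sq, ← normSq_eq_norm_sq, normSq_add, map_one, one_mul, conj_re]
    linarith
  refine le_of_mul_le_mul_left ?_ (norm_pos_iff.2 hz)
  calc ‖z‖ * ‖sin (π * z)‖ ≤ ‖1 + z‖ * ‖sin (π * z)‖ := by gcongr
    _ = ‖z‖ * ‖shiftedSin z‖ := by rw [← norm_mul, ← norm_mul, mul_shiftedSin]

theorem two_le_norm_shiftedSin {z : ℂ} (hre : 0 ≤ z.re) (hre' : z.re ≤ 1 / 2) :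
    2 ≤ ‖shiftedSin z‖ := by
  rcases eq_or_ne z 0 with rfl | hz
  · rw [shiftedSin_zero, norm_real, Real.norm_of_nonneg Real.pi_pos.le]
    exact Real.two_le_pi
  have hone : 1 ≤ ‖1 + z‖ := by
    refine le_trans ?_ (re_le_norm (1 + z))
    rw [add_re, one_re]
    linarith
  refine le_of_mul_le_mul_left ?_ (norm_pos_iff.2 hz)
  calc ‖z‖ * 2 ≤ ‖sin (π * z)‖ := by
        rw [mul_comm]
        exact two_mul_norm_le_norm_sin_pi_mul (by rwa [abs_of_nonneg hre])
    _ ≤ ‖1 + z‖ * ‖sin (π * z)‖ := le_mul_of_one_le_left (norm_nonneg _) hone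
    _ = ‖z‖ * ‖shiftedSin z‖ := by rw [← norm_mul, ← norm_mul, mul_shiftedSin]

theorem one_le_norm_shiftedSin {z : ℂ} {n : ℤ} (hre : 0 ≤ z.re) (hn : |z.re - n| ≤ 1 / 2)
    (hz : 1 / 2 ≤ ‖z - n‖) : 1 ≤ ‖shiftedSin z‖ := by
  linarith [two_mul_norm_sub_intCast_le_norm_sin_pi_mul hn, norm_sin_pi_mul_le_norm_shiftedSin hre]

theorem exists_ball_of_norm_shiftedSin_lt_one {z : ℂ} (hre : 0 ≤ z.re)
    (hz : ‖shiftedSin z‖ < 1) :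
    ∃ a : ℂ, z ∈ Metric.ball a (1 / 2) ∧ Metric.closedBall a (1 / 2) ⊆ {w | 0 < w.re} ∧
      ∀ w ∈ Metric.sphere a (1 / 2), 1 ≤ ‖shiftedSin w‖ := by
  set n : ℤ := round z.re
  have hzn : |z.re - n| ≤ 1 / 2 := abs_sub_round z.re
  have hball : ‖z - n‖ < 1 / 2 := not_le.1 fun h => hz.not_ge (one_le_norm_shiftedSin hre hzn h)
  have hre_half : 1 / 2 < z.re :=
    not_le.1 fun h => hz.not_ge (one_le_two.trans (two_le_norm_shiftedSin hre h))
  have hn : (1 : ℝ) ≤ n := by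
    have : (0 : ℝ) < n := by linarith [(abs_le.1 hzn).2]
    exact_mod_cast this
  have hre_near : ∀ w ∈ Metric.closedBall (n : ℂ) (1 / 2), |w.re - n| ≤ 1 / 2 := fun w hw =>
    le_trans (by simpa using abs_re_le_norm (w - n)) (mem_closedBall_iff_norm.1 hw)
  have hpos_near : Metric.closedBall (n : ℂ) (1 / 2) ⊆ {w | 0 < w.re} := fun w hw => by
    rw [mem_ofPred_eq]
    linarith [(abs_le.1 (hre_near w hw)).1]
  refine ⟨n, mem_ball_iff_norm.2 hball, hpos_near, fun w hw => ?_⟩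
  have hw' := Metric.sphere_subset_closedBall hw
  exact one_le_norm_shiftedSin (le_of_lt (hpos_near hw')) (hre_near w hw')
    (mem_sphere_iff_norm.1 hw).ge

theorem exp_pi_mul_abs_le_norm_shiftedSin (y : ℝ) :
    Real.exp (π * |y|) ≤ 4 * ‖shiftedSin (y * I)‖ := by
  have hre : ((y : ℂ) * I).re = 0 := by simp
  have hnorm : ‖sin (π * (y * I))‖ = Real.sinh (π * |y|) := by
    rw [← mul_assoc, sin_mul_I, norm_mul, norm_I, mul_one, ← ofReal_mul, ← ofReal_sinh, norm_real,
      Real.norm_eq_abs, Real.abs_sinh, abs_mul, abs_of_pos Real.pi_pos]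
  have hsinh : Real.sinh (π * |y|) ≤ ‖shiftedSin (y * I)‖ :=
    hnorm ▸ norm_sin_pi_mul_le_norm_shiftedSin hre.ge
  have htwo : 2 ≤ ‖shiftedSin (y * I)‖ := two_le_norm_shiftedSin hre.ge (by rw [hre]; norm_num)
  have hexp : Real.exp (-(π * |y|)) ≤ 1 := Real.exp_le_one_iff.2 (neg_nonpos.2 (by positivity))
  rw [Real.sinh_eq] at hsinh
  linarith

end Sine

section DecayKernel

/-- The Phragmén–Lindelöf multiplier `(1 + z) ^ (-δ z)`: it decays superexponentially on the
positive real axis and has exponential type `δ π / 2` along the imaginary axis. -/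
noncomputable def decayKernel (δ : ℝ) (z : ℂ) : ℂ := exp (-δ * z * log (1 + z))

theorem differentiableAt_decayKernel (δ : ℝ) {z : ℂ} (hz : 0 ≤ z.re) :
    DifferentiableAt ℂ (decayKernel δ) z := by
  have hslit : 1 + z ∈ slitPlane := Or.inl (by rw [add_re, one_re]; linarith)
  unfold decayKernel
  fun_prop (disch := assumption)

theorem diffContOnCl_decayKernel (δ : ℝ) : DiffContOnCl ℂ (decayKernel δ) {z | 0 < z.re} := by
  refine DifferentiableOn.diffContOnCl fun z hz => ?_
  rw [closure_setOfPred_lt_re] at hz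
  exact (differentiableAt_decayKernel δ hz).differentiableWithinAt

theorem norm_decayKernel_le {δ : ℝ} (hδ : 0 ≤ δ) {z : ℂ} (hz : 0 ≤ z.re) :
    ‖decayKernel δ z‖ ≤ Real.exp (δ * (π / 2) * |z.im|) := by
  have hre : (-δ * z * log (1 + z)).re
      = δ * (z.im * arg (1 + z)) - δ * (z.re * Real.log ‖1 + z‖) := by
    simp only [mul_re, mul_im, neg_re, neg_im, ofReal_re, ofReal_im, log_re, log_im]
    ring
  have hlog : 0 ≤ Real.log ‖1 + z‖ := by
    refine Real.log_nonneg (le_trans ?_ (re_le_norm (1 + z)))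
    rw [add_re, one_re]
    linarith
  have harg : z.im * arg (1 + z) ≤ π / 2 * |z.im| := by
    have : |arg (1 + z)| ≤ π / 2 :=
      abs_arg_le_pi_div_two_iff.2 (by rw [add_re, one_re]; linarith)
    calc z.im * arg (1 + z) ≤ |z.im| * |arg (1 + z)| := abs_mul (z.im) _ ▸ le_abs_self _
      _ ≤ π / 2 * |z.im| := by rw [mul_comm]; gcongr
  rw [decayKernel, norm_exp, hre, mul_assoc]
  gcongr
  linarith [mul_le_mul_of_nonneg_left harg hδ, mul_nonneg hδ (mul_nonneg hz hlog)]

theorem norm_decayKernel_ofReal (δ : ℝ) {x : ℝ} (hx : 0 ≤ x) :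
    ‖decayKernel δ x‖ = Real.exp (-δ * x * Real.log (1 + x)) := by
  have hlog : log (1 + x) = (Real.log (1 + x) : ℝ) := by
    rw [ofReal_log (by linarith), ofReal_add, ofReal_one]
  rw [decayKernel, hlog, norm_exp]
  norm_cast

theorem superpolynomialDecay_norm_decayKernel_mul_exp {δ : ℝ} (hδ : 0 < δ) (τ : ℝ) :
    SuperpolynomialDecay atTop Real.exp
      fun x : ℝ => ‖decayKernel δ x‖ * Real.exp (τ * x) := by
  intro n
  have hlog : Tendsto (fun x : ℝ => δ * Real.log (1 + x)) atTop atTop :=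
    (Real.tendsto_log_atTop.comp (tendsto_atTop_add_const_left _ _ tendsto_id)).const_mul_atTop hδ
  refine squeeze_zero' (Eventually.of_forall fun x => by positivity) ?_
    Real.tendsto_exp_neg_atTop_nhds_zero
  filter_upwards [hlog.eventually_ge_atTop (n + τ + 1), eventually_ge_atTop 0] with x hx hx₀
  rw [norm_decayKernel_ofReal δ hx₀, ← Real.exp_nat_mul, ← Real.exp_add, ← Real.exp_add]
  gcongr
  linarith [mul_le_mul_of_nonneg_left hx hx₀]

end DecayKernel

section RightHalfPlane

variable {E : Type*} [NormedAddCommGroup E] [NormedSpace ℂ E] {f : ℂ → E} {A τ B c : ℝ}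

theorem eqOn_zero_of_exp_decay_on_imaginary_axis {ε : ℝ} (hε : 0 < ε)
    (hd : DiffContOnCl ℂ f {z | 0 < z.re})
    (hexp : ∀ z : ℂ, 0 < z.re → ‖f z‖ ≤ A * Real.exp (τ * ‖z‖))
    (him : ∀ y : ℝ, ‖f (y * I)‖ ≤ B * Real.exp (-(ε * |y|))) :
    EqOn f 0 {z | 0 ≤ z.re} := by
  obtain ⟨δ, hδ, hδε⟩ : ∃ δ : ℝ, 0 < δ ∧ δ * (π / 2) = ε :=
    ⟨ε / (π / 2), by positivity, by field_simp⟩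
  have hK : ∀ z : ℂ, 0 ≤ z.re → ‖decayKernel δ z‖ ≤ Real.exp (ε * |z.im|) := fun z hz =>
    hδε ▸ norm_decayKernel_le hδ.le hz
  have hprod : EqOn (fun z => decayKernel δ z • f z) 0 {z | 0 ≤ z.re} := by
    refine PhragmenLindelof.eq_zero_on_right_half_plane_of_superexponential_decay
      ((diffContOnCl_decayKernel δ).smul hd)
      ⟨1, one_lt_two, ε + τ, IsBigO.of_bound A ?_⟩ ?_ ⟨B, fun y => ?_⟩
    · refine eventually_inf_principal.2 (Eventually.of_forall fun z (hz : 0 < z.re) => ?_)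
      rw [norm_smul, Real.rpow_one, Real.norm_of_nonneg (Real.exp_pos _).le]
      calc ‖decayKernel δ z‖ * ‖f z‖ ≤ Real.exp (ε * ‖z‖) * (A * Real.exp (τ * ‖z‖)) := by
            gcongr
            · exact (hK z hz.le).trans (by gcongr; exact abs_im_le_norm z)
            · exact hexp z hz
        _ = A * Real.exp ((ε + τ) * ‖z‖) := by rw [add_mul, Real.exp_add]; ring
    · refine ((superpolynomialDecay_norm_decayKernel_mul_exp hδ τ).const_mul
        A).trans_eventually_abs_le ?_
      filter_upwards [eventually_gt_atTop 0] with x hx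
      have hfx : ‖f x‖ ≤ A * Real.exp (τ * x) := by
        simpa [abs_of_pos hx] using hexp x (by simpa using hx)
      rw [Function.comp_apply, Function.comp_apply, norm_smul, mul_left_comm,
        abs_of_nonneg (by positivity)]
      exact (mul_le_mul_of_nonneg_left hfx (norm_nonneg _)).trans (le_abs_self _)
    · calc ‖decayKernel δ (y * I) • f (y * I)‖
          ≤ Real.exp (ε * |y|) * (B * Real.exp (-(ε * |y|))) := by
            rw [norm_smul]
            gcongr
            · simpa using hK (y * I) (by simp)
            · exact him y
        _ = B := by rw [mul_left_comm, ← Real.exp_add, add_neg_cancel, Real.exp_zero, mul_one]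
  exact fun z hz => (smul_eq_zero.1 (hprod hz)).resolve_left (exp_ne_zero _)

variable [CompleteSpace E]

theorem diffContOnCl_simpleZeroQuotient_shiftedSin (hd : DiffContOnCl ℂ f {z | 0 < z.re})
    (hzero : ∀ n : ℕ, 0 < n → f n = 0) :
    DiffContOnCl ℂ (simpleZeroQuotient f shiftedSin) {z | 0 < z.re} := by
  refine diffContOnCl_simpleZeroQuotient (isOpen_lt continuous_const continuous_re) hd
    differentiable_shiftedSin.diffContOnCl fun z hz hgz => ?_
  rw [closure_setOfPred_lt_re] at hz
  obtain ⟨n, hn, rfl⟩ := exists_natCast_of_shiftedSin_eq_zero hz hgz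
  exact ⟨by simpa using hn, hzero n hn, deriv_shiftedSin_natCast_ne_zero hgz⟩

theorem norm_simpleZeroQuotient_shiftedSin_le (hτ : 0 ≤ τ) (hd : DiffContOnCl ℂ f {z | 0 < z.re})
    (hexp : ∀ z : ℂ, 0 < z.re → ‖f z‖ ≤ A * Real.exp (τ * ‖z‖))
    (hzero : ∀ n : ℕ, 0 < n → f n = 0) {z : ℂ} (hz : 0 < z.re) :
    ‖simpleZeroQuotient f shiftedSin z‖ ≤ A * Real.exp τ * Real.exp (τ * ‖z‖) := by
  have hA : 0 ≤ A :=
    nonneg_of_mul_nonneg_left ((norm_nonneg _).trans (hexp z hz)) (Real.exp_pos _)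
  have hfar : ∀ w : ℂ, 0 < w.re → ‖w - z‖ ≤ 1 → 1 ≤ ‖shiftedSin w‖ →
      ‖simpleZeroQuotient f shiftedSin w‖ ≤ A * Real.exp τ * Real.exp (τ * ‖z‖) := by
    intro w hw hwz hgw
    have hnorm : ‖w‖ ≤ 1 + ‖z‖ := by linarith [norm_le_norm_sub_add w z]
    calc ‖simpleZeroQuotient f shiftedSin w‖ ≤ A * Real.exp (τ * ‖w‖) :=
          (norm_simpleZeroQuotient_le hgw).trans (hexp w hw)
      _ ≤ A * Real.exp (τ * (1 + ‖z‖)) := by gcongr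
      _ = A * Real.exp τ * Real.exp (τ * ‖z‖) := by
          rw [mul_add, mul_one, Real.exp_add, mul_assoc]
  rcases le_or_gt 1 ‖shiftedSin z‖ with hgz | hgz
  · exact hfar z hz (by simp) hgz
  obtain ⟨a, hza, hsub, hsphere⟩ := exists_ball_of_norm_shiftedSin_lt_one hz.le hgz
  refine norm_le_of_forall_mem_frontier_norm_le Metric.isBounded_ball
    ((diffContOnCl_simpleZeroQuotient_shiftedSin hd hzero).mono
      (Metric.ball_subset_closedBall.trans hsub)) (fun w hw => ?_) (subset_closure hza)
  have hw' := Metric.frontier_ball_subset_sphere hw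
  refine hfar w (hsub (Metric.sphere_subset_closedBall hw')) ?_ (hsphere w hw')
  rw [mem_sphere_iff_norm] at hw'
  rw [mem_ball_iff_norm'] at hza
  linarith [norm_sub_le_norm_sub_add_norm_sub w a z]

theorem carlson_right_half_plane (hτ : 0 ≤ τ) (hc : c < π)
    (hd : DiffContOnCl ℂ f {z | 0 < z.re})
    (hexp : ∀ z : ℂ, 0 < z.re → ‖f z‖ ≤ A * Real.exp (τ * ‖z‖))
    (him : ∀ y : ℝ, ‖f (y * I)‖ ≤ B * Real.exp (c * |y|))
    (hzero : ∀ n : ℕ, 0 < n → f n = 0) :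
    EqOn f 0 {z | 0 ≤ z.re} := by
  have hquot : EqOn (simpleZeroQuotient f shiftedSin) 0 {z | 0 ≤ z.re} := by
    refine eqOn_zero_of_exp_decay_on_imaginary_axis (B := 4 * B) (sub_pos.2 hc)
      (diffContOnCl_simpleZeroQuotient_shiftedSin hd hzero)
      (fun z => norm_simpleZeroQuotient_shiftedSin_le hτ hd hexp hzero) fun y => ?_
    have hgy : Real.exp (π * |y|) / 4 ≤ ‖shiftedSin (y * I)‖ := by
      linarith [exp_pi_mul_abs_le_norm_shiftedSin y]
    have hgy₀ : shiftedSin (y * I) ≠ 0 := norm_pos_iff.1 (lt_of_lt_of_le (by positivity) hgy)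
    calc ‖simpleZeroQuotient f shiftedSin (y * I)‖
        = ‖shiftedSin (y * I)‖⁻¹ * ‖f (y * I)‖ := by
          rw [simpleZeroQuotient_of_ne_zero hgy₀, norm_smul, norm_inv]
      _ ≤ (Real.exp (π * |y|) / 4)⁻¹ * (B * Real.exp (c * |y|)) := by
          gcongr
          exact him y
      _ = 4 * B * Real.exp (-((π - c) * |y|)) := by
          rw [show -((π - c) * |y|) = c * |y| - π * |y| by ring, Real.exp_sub]
          field_simp
  intro z hz
  by_cases hgz : shiftedSin z = 0
  · obtain ⟨n, hn, rfl⟩ := exists_natCast_of_shiftedSin_eq_zero hz hgz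
    exact hzero n hn
  · have h := hquot hz
    rw [simpleZeroQuotient_of_ne_zero hgz] at h
    exact (smul_eq_zero.1 h).resolve_left (inv_ne_zero hgz)

end RightHalfPlane

theorem carlson_entire_general {X : Type*} [NormedAddCommGroup X] [NormedSpace ℂ X] {f : ℂ → X}
    (hf : Differentiable ℂ f) {A τ B c : ℝ} (hτ : 0 ≤ τ) (hc : c < π)
    (hexp : ∀ z : ℂ, 0 < z.re → ‖f z‖ ≤ A * Real.exp (τ * ‖z‖))
    (him : ∀ y : ℝ, ‖f (y * I)‖ ≤ B * Real.exp (c * |y|))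
    (hzero : ∀ n : ℕ, 0 < n → f n = 0) (z : ℂ) : f z = 0 := by
  let ι : X →ₗᵢ[ℂ] UniformSpace.Completion X := UniformSpace.Completion.toComplₗᵢ
  have hιf : Differentiable ℂ (ι ∘ f) := ι.toContinuousLinearMap.differentiable.comp hf
  have hhalf : EqOn (ι ∘ f) 0 {z | 0 ≤ z.re} :=
    carlson_right_half_plane hτ hc hιf.diffContOnCl
      (fun z hz => (ι.norm_map _).trans_le (hexp z hz))
      (fun y => (ι.norm_map _).trans_le (him y))
      (fun n hn => (congrArg ι (hzero n hn)).trans ι.map_zero)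
  have hone : ι ∘ f =ᶠ[𝓝 1] 0 := by
    filter_upwards [(isOpen_lt continuous_const continuous_re).mem_nhds
      (show (0 : ℝ) < re 1 by simp)] with w hw using hhalf (le_of_lt hw)
  have hιf_zero : ι ∘ f = 0 :=
    (analyticOnNhd_univ_iff_differentiable.2 hιf).eq_of_eventuallyEq analyticOnNhd_const hone
  exact (map_eq_zero_iff ι ι.injective).1 (congrFun hιf_zero z)

theorem mul_exp_ceil_abs_re_le {α β : ℝ} (hα : 0 ≤ α) (hβ : 0 ≤ β) (z : ℂ) :
    α * Real.exp (β * ⌈|z.re|⌉) ≤ α * Real.exp β * Real.exp (β * ‖z‖) := by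
  have hceil : (⌈|z.re|⌉ : ℝ) ≤ 1 + ‖z‖ := by
    linarith [Int.ceil_lt_add_one |z.re|, abs_re_le_norm z]
  calc α * Real.exp (β * ⌈|z.re|⌉) ≤ α * Real.exp (β * (1 + ‖z‖)) := by gcongr
    _ = α * Real.exp β * Real.exp (β * ‖z‖) := by
      rw [mul_add, mul_one, Real.exp_add, mul_assoc]

/-- **Carlson's theorem** (Banach-space-valued, exponential-ceiling bound).
Let `f : ℂ → X` be entire with `‖f z‖ ≤ α · exp (β · ⌈|Re z|⌉)` for some constants
`α, β > 0`. If `f` vanishes at every integer, then `f` vanishes identically. -/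
theorem carlson_entire
    {X : Type*} [NormedAddCommGroup X] [NormedSpace ℂ X] [CompleteSpace X]
    (f : ℂ → X) (hf : Differentiable ℂ f)
    (α β : ℝ) (hα : 0 < α) (hβ : 0 < β)
    (hbound : ∀ z : ℂ, ‖f z‖ ≤ α * Real.exp (β * (⌈|z.re|⌉ : ℝ)))
    (hzero : ∀ n : ℤ, f (n : ℂ) = 0) :
    ∀ z : ℂ, f z = 0 :=
  carlson_entire_general (c := 0) hf hβ.le Real.pi_pos
    (fun z _ => (hbound z).trans (mul_exp_ceil_abs_re_le hα.le hβ.le z))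
    (fun y => by simpa using hbound (y * I)) fun n _ => by exact_mod_cast hzero n
end

section
/- Carlson's theorem (right half-plane version): Let X be a complex Banach space and let f : ℂ → X be continuous on the closed right half-plane {z : Re z ≥ 0} and complex-differentiable on the open right half-plane {z : Re z > 0}. Suppose there exist constants α, β > 0 such that ‖f(z)‖ ≤ α · exp(β · ⌈Re z⌉) for all z with Re z ≥ 0, where ⌈·⌉ denotes the ceiling. If f(n) = 0 for every nonnegative integer n, then f(z) = 0 for all z with Re z ≥ 0. -/
/-!
Multiplying `f` by `exp (-β z)` reduces the theorem to bounded functions. If `g` is holomorphic and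
bounded by `M` on the right half-plane and vanishes at `a`, then, moving `a` to the centre of the
unit disc by a Cayley transform, the Schwarz lemma says that dividing `g` by the Blaschke factor
`(z - a) / (z + conj a)` preserves the bound `M`. Dividing out finitely many zeros gives
`‖g z‖ ≤ M ∏ ‖(z - a) / (z + conj a)‖ ≤ M exp (-c(z) ∑ Re a / (1 + ‖a‖²))` with `c(z) > 0`. So if
`g z ≠ 0` for some `z`, the sum over all zeros converges; over the positive integers it diverges
like the harmonic series.
-/

open Metric Set
open scoped ComplexConjugate

section BlaschkeFactor

/-- The Blaschke factor of the right half-plane with zero `a`, that is, the Cayley transform onto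
the unit disc which sends `a` to `0`. When `a` lies in the open right half-plane, its pole `-conj a`
lies outside the closed one. -/
noncomputable def blaschkeFactor (a z : ℂ) : ℂ := (z - a) / (z + conj a)

/-- The inverse of the Cayley transform `blaschkeFactor a`, from the unit disc onto the right
half-plane. -/
noncomputable def blaschkeFactorInv (a w : ℂ) : ℂ := (a + conj a * w) / (1 - w)

variable {a z w : ℂ}

lemma add_conj_ne_zero (ha : 0 < a.re) (hz : 0 < z.re) : z + conj a ≠ 0 := fun h ↦ by
  have hre : z.re + a.re = 0 := by simpa using congrArg Complex.re h
  linarith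

lemma blaschkeFactor_ne_zero (ha : 0 < a.re) (hz : 0 < z.re) (hne : z ≠ a) :
    blaschkeFactor a z ≠ 0 :=
  div_ne_zero (sub_ne_zero.2 hne) (add_conj_ne_zero ha hz)

lemma sq_norm_blaschkeFactor (h : z + conj a ≠ 0) :
    ‖blaschkeFactor a z‖ ^ 2 = 1 - 4 * z.re * a.re / ‖z + conj a‖ ^ 2 := by
  have hpos : ‖z + conj a‖ ^ 2 ≠ 0 := pow_ne_zero 2 (norm_ne_zero_iff.2 h)
  rw [blaschkeFactor, norm_div, div_pow, eq_sub_iff_add_eq, ← add_div, div_eq_one_iff_eq hpos,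
    Complex.sq_norm, Complex.sq_norm, Complex.normSq_apply, Complex.normSq_apply]
  simp only [Complex.sub_re, Complex.sub_im, Complex.add_re, Complex.add_im, Complex.conj_re,
    Complex.conj_im]
  ring

lemma norm_blaschkeFactor_lt_one (ha : 0 < a.re) (hz : 0 < z.re) : ‖blaschkeFactor a z‖ < 1 := by
  have hne := add_conj_ne_zero ha hz
  have hpos : 0 < 4 * z.re * a.re / ‖z + conj a‖ ^ 2 := by positivity
  refine (sq_lt_one_iff₀ (norm_nonneg _)).1 ?_
  rw [sq_norm_blaschkeFactor hne]
  linarith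

lemma sq_norm_add_conj_le (a z : ℂ) : ‖z + conj a‖ ^ 2 ≤ (1 + ‖z‖ ^ 2) * (1 + ‖a‖ ^ 2) := by
  have htri : ‖z + conj a‖ ≤ ‖z‖ + ‖a‖ := by simpa using norm_add_le z (conj a)
  calc ‖z + conj a‖ ^ 2 ≤ (‖z‖ + ‖a‖) ^ 2 := by gcongr
    _ ≤ (1 + ‖z‖ ^ 2) * (1 + ‖a‖ ^ 2) := by nlinarith [sq_nonneg (1 - ‖z‖ * ‖a‖)]

lemma norm_blaschkeFactor_le_exp (ha : 0 < a.re) (hz : 0 < z.re) :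
    ‖blaschkeFactor a z‖ ≤
      Real.exp (-(2 * z.re / (1 + ‖z‖ ^ 2) * (a.re / (1 + ‖a‖ ^ 2)))) := by
  set u := 2 * z.re / (1 + ‖z‖ ^ 2) * (a.re / (1 + ‖a‖ ^ 2)) with hu
  have hne := add_conj_ne_zero ha hz
  have hle : 2 * u ≤ 4 * z.re * a.re / ‖z + conj a‖ ^ 2 :=
    calc 2 * u = 4 * z.re * a.re / ((1 + ‖z‖ ^ 2) * (1 + ‖a‖ ^ 2)) := by
          rw [hu, div_mul_div_comm]; ring
      _ ≤ _ := by gcongr; exact sq_norm_add_conj_le a z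
  refine (sq_le_sq₀ (norm_nonneg _) (Real.exp_nonneg _)).1 ?_
  calc ‖blaschkeFactor a z‖ ^ 2 ≤ -(2 * u) + 1 := by rw [sq_norm_blaschkeFactor hne]; linarith
    _ ≤ Real.exp (-(2 * u)) := Real.add_one_le_exp _
    _ = Real.exp (-u) ^ 2 := by rw [← Real.exp_nat_mul]; congr 1; push_cast; ring

lemma differentiableOn_blaschkeFactor (ha : 0 < a.re) :
    DifferentiableOn ℂ (blaschkeFactor a) {z | 0 < z.re} :=
  DifferentiableOn.fun_div (by fun_prop) (by fun_prop) fun _ hz ↦ add_conj_ne_zero ha hz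

lemma one_sub_ne_zero_of_norm_lt_one (hw : ‖w‖ < 1) : 1 - w ≠ 0 :=
  sub_ne_zero.2 fun h ↦ by simp [← h] at hw

lemma differentiableOn_blaschkeFactorInv (a : ℂ) :
    DifferentiableOn ℂ (blaschkeFactorInv a) (ball 0 1) :=
  DifferentiableOn.fun_div (by fun_prop) (by fun_prop) fun _ hw ↦
    one_sub_ne_zero_of_norm_lt_one (mem_ball_zero_iff.1 hw)

@[simp]
lemma blaschkeFactorInv_zero (a : ℂ) : blaschkeFactorInv a 0 = a := by
  simp [blaschkeFactorInv]

lemma re_blaschkeFactorInv (a w : ℂ) :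
    (blaschkeFactorInv a w).re = a.re * (1 - ‖w‖ ^ 2) / ‖1 - w‖ ^ 2 := by
  rw [blaschkeFactorInv, Complex.div_re, ← add_div, Complex.sq_norm, Complex.sq_norm,
    Complex.normSq_apply w]
  simp only [Complex.add_re, Complex.add_im, Complex.mul_re, Complex.mul_im, Complex.sub_re,
    Complex.sub_im, Complex.one_re, Complex.one_im, Complex.conj_re, Complex.conj_im]
  ring

lemma re_blaschkeFactorInv_pos (ha : 0 < a.re) (hw : ‖w‖ < 1) :
    0 < (blaschkeFactorInv a w).re := by
  have hne := one_sub_ne_zero_of_norm_lt_one hw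
  have hsq : 0 < 1 - ‖w‖ ^ 2 := sub_pos.2 ((sq_lt_one_iff₀ (norm_nonneg _)).2 hw)
  rw [re_blaschkeFactorInv]
  positivity

lemma blaschkeFactorInv_blaschkeFactor (ha : 0 < a.re) (hz : 0 < z.re) :
    blaschkeFactorInv a (blaschkeFactor a z) = z := by
  have hne := add_conj_ne_zero ha hz
  have hw := one_sub_ne_zero_of_norm_lt_one (norm_blaschkeFactor_lt_one ha hz)
  rw [blaschkeFactorInv, div_eq_iff hw, blaschkeFactor]
  field_simp
  ring

end BlaschkeFactor

section BoundedFunctions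

variable {X : Type*} [NormedAddCommGroup X] [NormedSpace ℂ X] {g : ℂ → X} {M : ℝ}

lemma exists_eq_blaschkeFactor_smul [CompleteSpace X]
    (hg : DifferentiableOn ℂ g {z | 0 < z.re}) (hM : ∀ z : ℂ, 0 < z.re → ‖g z‖ ≤ M)
    {a : ℂ} (ha : 0 < a.re) (hga : g a = 0) :
    ∃ h : ℂ → X, DifferentiableOn ℂ h {z | 0 < z.re} ∧ (∀ z : ℂ, 0 < z.re → ‖h z‖ ≤ M) ∧
      ∀ z : ℂ, 0 < z.re → g z = blaschkeFactor a z • h z := by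
  set G : ℂ → X := g ∘ blaschkeFactorInv a with hG_def
  have hG0 : G 0 = 0 := by simp [hG_def, hga]
  have hG : DifferentiableOn ℂ G (ball 0 1) :=
    hg.comp (differentiableOn_blaschkeFactorInv a) fun w hw ↦
      re_blaschkeFactorInv_pos ha (mem_ball_zero_iff.1 hw)
  have hGM : MapsTo G (ball 0 1) (closedBall (G 0) M) := fun w hw ↦ by
    rw [hG0, mem_closedBall_zero_iff]
    exact hM _ (re_blaschkeFactorInv_pos ha (mem_ball_zero_iff.1 hw))
  have hball : MapsTo (blaschkeFactor a) {z | 0 < z.re} (ball 0 1) := fun z hz ↦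
    mem_ball_zero_iff.2 (norm_blaschkeFactor_lt_one ha hz)
  refine ⟨dslope G 0 ∘ blaschkeFactor a, ?_, fun z hz ↦ ?_, fun z hz ↦ ?_⟩
  · exact ((Complex.differentiableOn_dslope (ball_mem_nhds 0 one_pos)).2 hG).comp
      (differentiableOn_blaschkeFactor ha) hball
  · simpa using Complex.norm_dslope_le_div_of_mapsTo_ball hG hGM (hball hz)
  · have hslope := sub_smul_dslope_of_zero hG0 (blaschkeFactor a z)
    rw [sub_zero] at hslope
    rw [Function.comp_apply, hslope, hG_def, Function.comp_apply,
      blaschkeFactorInv_blaschkeFactor ha hz]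

lemma norm_le_mul_prod_norm_blaschkeFactor
    (hg : DifferentiableOn ℂ g {z | 0 < z.re}) (hM : ∀ z : ℂ, 0 < z.re → ‖g z‖ ≤ M)
    {s : Finset ℂ} (hs : ∀ a ∈ s, 0 < a.re) (hzero : ∀ a ∈ s, g a = 0)
    {z : ℂ} (hz : 0 < z.re) :
    ‖g z‖ ≤ M * ∏ a ∈ s, ‖blaschkeFactor a z‖ := by
  wlog hX : CompleteSpace X generalizing X
  · let e : X →L[ℂ] UniformSpace.Completion X := UniformSpace.Completion.toComplL
    have he (x : X) : ‖e x‖ = ‖x‖ := UniformSpace.Completion.norm_coe x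
    simpa only [he] using this (g := fun z ↦ e (g z)) (e.differentiable.comp_differentiableOn hg)
      (fun z hz ↦ (he _).trans_le (hM z hz)) (fun a ha ↦ by rw [hzero a ha, map_zero])
      inferInstance
  induction s using Finset.induction_on generalizing g with
  | empty => simpa using hM z hz
  | insert a s has ih =>
    obtain ⟨ha, hs⟩ := Finset.forall_mem_insert .. |>.1 hs
    obtain ⟨hga, hgs⟩ := Finset.forall_mem_insert .. |>.1 hzero
    obtain ⟨h, hh, hhM, hgh⟩ := exists_eq_blaschkeFactor_smul hg hM ha hga
    have hhs (b : ℂ) (hb : b ∈ s) : h b = 0 := by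
      have hba : b ≠ a := ne_of_mem_of_not_mem hb has
      have hsmul : blaschkeFactor a b • h b = 0 := (hgh b (hs b hb)).symm.trans (hgs b hb)
      exact (smul_eq_zero.1 hsmul).resolve_left (blaschkeFactor_ne_zero ha (hs b hb) hba)
    calc ‖g z‖ = ‖blaschkeFactor a z‖ * ‖h z‖ := by rw [hgh z hz, norm_smul]
      _ ≤ ‖blaschkeFactor a z‖ * (M * ∏ b ∈ s, ‖blaschkeFactor b z‖) := by
        gcongr; exact ih hs hh hhM hhs
      _ = M * ∏ b ∈ insert a s, ‖blaschkeFactor b z‖ := by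
        rw [Finset.prod_insert has, mul_left_comm]

lemma norm_le_mul_exp_neg_sum
    (hg : DifferentiableOn ℂ g {z | 0 < z.re}) (hM : ∀ z : ℂ, 0 < z.re → ‖g z‖ ≤ M)
    {s : Finset ℂ} (hs : ∀ a ∈ s, 0 < a.re) (hzero : ∀ a ∈ s, g a = 0)
    {z : ℂ} (hz : 0 < z.re) :
    ‖g z‖ ≤ M * Real.exp (-(2 * z.re / (1 + ‖z‖ ^ 2) * ∑ a ∈ s, a.re / (1 + ‖a‖ ^ 2))) := by
  have hM0 : 0 ≤ M := (norm_nonneg _).trans (hM z hz)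
  refine (norm_le_mul_prod_norm_blaschkeFactor hg hM hs hzero hz).trans ?_
  rw [Finset.mul_sum, ← Finset.sum_neg_distrib, Real.exp_sum]
  gcongr with a ha
  exact norm_blaschkeFactor_le_exp (hs a ha) hz

lemma summable_re_div_one_add_sq_norm_of_ne_zero {ι : Type*} {a : ι → ℂ}
    (hg : DifferentiableOn ℂ g {z | 0 < z.re}) (hM : ∀ z : ℂ, 0 < z.re → ‖g z‖ ≤ M)
    (ha : Function.Injective a) (hpos : ∀ i, 0 < (a i).re) (hzero : ∀ i, g (a i) = 0)
    {z : ℂ} (hz : 0 < z.re) (hgz : g z ≠ 0) :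
    Summable fun i ↦ (a i).re / (1 + ‖a i‖ ^ 2) := by
  set c := 2 * z.re / (1 + ‖z‖ ^ 2)
  have hc : 0 < c := by positivity
  have hgz' : 0 < ‖g z‖ := norm_pos_iff.2 hgz
  refine summable_of_sum_le (c := Real.log (M / ‖g z‖) / c)
    (fun i ↦ div_nonneg (hpos i).le (by positivity)) fun t ↦ ?_
  have hexp := norm_le_mul_exp_neg_sum (s := t.map ⟨a, ha⟩) hg hM (by simp [hpos])
    (by simp [hzero]) hz
  rw [Finset.sum_map, Function.Embedding.coeFn_mk, Real.exp_neg, ← div_eq_mul_inv,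
    le_div_iff₀ (Real.exp_pos _)] at hexp
  rw [le_div_iff₀' hc]
  have hexp_le := (le_div_iff₀' hgz').2 hexp
  exact (Real.le_log_iff_exp_le ((Real.exp_pos _).trans_le hexp_le)).2 hexp_le

end BoundedFunctions

lemma not_summable_natCast_div_one_add_sq : ¬ Summable fun n : ℕ ↦ (n : ℝ) / (1 + (n : ℝ) ^ 2) := by
  refine fun h ↦ Real.not_summable_natCast_inv ?_
  refine (h.mul_left 2).of_nonneg_of_le (fun n ↦ by positivity) fun n ↦ ?_
  rcases n.eq_zero_or_pos with rfl | hn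
  · simp
  · have hn1 : (1 : ℝ) ≤ n := by exact_mod_cast hn
    rw [← mul_div_assoc, inv_eq_one_div, div_le_div_iff₀ (by positivity) (by positivity)]
    nlinarith

lemma mul_exp_mul_ceil_le {α β : ℝ} (hα : 0 ≤ α) (hβ : 0 ≤ β) (x : ℝ) :
    α * Real.exp (β * ⌈x⌉) ≤ α * Real.exp β * Real.exp (β * x) := by
  rw [mul_assoc, ← Real.exp_add]
  gcongr
  linarith [mul_le_mul_of_nonneg_left (Int.ceil_lt_add_one x).le hβ]

theorem carlson_half_plane_general
    {X ι : Type*} [NormedAddCommGroup X] [NormedSpace ℂ X] {f : ℂ → X} {a : ι → ℂ} {α β : ℝ}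
    (hcont : ContinuousOn f {z : ℂ | 0 ≤ z.re})
    (hdiff : DifferentiableOn ℂ f {z : ℂ | 0 < z.re})
    (hbound : ∀ z : ℂ, 0 < z.re → ‖f z‖ ≤ α * Real.exp (β * z.re))
    (ha : Function.Injective a) (hpos : ∀ i, 0 < (a i).re) (hzero : ∀ i, f (a i) = 0)
    (hsum : ¬ Summable fun i ↦ (a i).re / (1 + ‖a i‖ ^ 2)) :
    ∀ z : ℂ, 0 ≤ z.re → f z = 0 := by
  let g : ℂ → X := fun z ↦ Complex.exp (-(β * z)) • f z
  have hg : DifferentiableOn ℂ g {z | 0 < z.re} := by fun_prop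
  have hgα (z : ℂ) (hz : 0 < z.re) : ‖g z‖ ≤ α :=
    calc ‖g z‖ = (Real.exp (β * z.re))⁻¹ * ‖f z‖ := by
          simp [g, norm_smul, Complex.norm_exp, Real.exp_neg]
      _ ≤ α := (inv_mul_le_iff₀' (Real.exp_pos _)).2 (hbound z hz)
  have hopen (z : ℂ) (hz : 0 < z.re) : f z = 0 := by
    by_contra hfz
    exact hsum <| summable_re_div_one_add_sq_norm_of_ne_zero hg hgα ha hpos
      (fun i ↦ by simp [g, hzero i]) hz (smul_ne_zero (Complex.exp_ne_zero _) hfz)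
  exact EqOn.of_subset_closure hopen hcont continuousOn_const (fun z (hz : 0 < z.re) ↦ hz.le)
    (Complex.closure_setOfPred_lt_re 0).ge

/-- **Carlson's theorem** (right half-plane version).
Let `f : ℂ → X` be continuous on the closed right half-plane, holomorphic on the open
right half-plane, and satisfy `‖f z‖ ≤ α · exp (β · ⌈Re z⌉)` there, for some `α, β > 0`.
If `f` vanishes at every nonnegative integer, then `f` vanishes on the whole closed
right half-plane. -/
theorem carlson_half_plane
    {X : Type*} [NormedAddCommGroup X] [NormedSpace ℂ X] [CompleteSpace X]
    (f : ℂ → X)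
    (hcont : ContinuousOn f {z : ℂ | 0 ≤ z.re})
    (hdiff : DifferentiableOn ℂ f {z : ℂ | 0 < z.re})
    (α β : ℝ) (hα : 0 < α) (hβ : 0 < β)
    (hbound : ∀ z : ℂ, 0 ≤ z.re → ‖f z‖ ≤ α * Real.exp (β * (⌈z.re⌉ : ℝ)))
    (hzero : ∀ n : ℕ, f (n : ℂ) = 0) :
    ∀ z : ℂ, 0 ≤ z.re → f z = 0 := by
  refine carlson_half_plane_general (a := fun n : ℕ ↦ ((n + 1 : ℕ) : ℂ)) hcont hdiff
    (fun z hz ↦ (hbound z hz.le).trans (mul_exp_mul_ceil_le hα.le hβ.le z.re))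
    (Nat.cast_injective.comp Nat.succ_injective) (fun n ↦ by simpa using n.cast_add_one_pos)
    (fun n ↦ hzero (n + 1)) ?_
  simpa only [Complex.natCast_re, Complex.norm_natCast] using
    mt (summable_nat_add_iff 1).1 not_summable_natCast_div_one_add_sq
end

section
/- Phragmén–Lindelöf theorem for sectors (Banach-space-valued): Let X be a complex Banach space. Let 0 < θ and let W be the closed angular sector {z ∈ ℂ : z = 0 or arg z ∈ [φ₀ − θ/2, φ₀ + θ/2]} of angular extent θ (contained in the plane, with vertex at the origin). Let f : W → X be holomorphic in the interior of W and continuous on W. Suppose ‖f(z)‖ ≤ C for all z on the two boundary half-lines of W, and suppose there exist constants α, β and γ with 0 < γ < π/θ such that ‖f(z)‖ ≤ α · exp(β · |z|^γ) for all z ∈ W. Then ‖f(z)‖ ≤ C for all z ∈ W. -/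
noncomputable section

/-- The closed angular sector with vertex at the origin, bisecting direction `φ₀`, and
angular extent `θ`: the set of points `r · exp(i φ)` with `r ≥ 0` and
`φ ∈ [φ₀ - θ/2, φ₀ + θ/2]`. -/
def angularSector (φ₀ θ : ℝ) : Set ℂ :=
  {z : ℂ | ∃ r φ : ℝ, 0 ≤ r ∧ φ₀ - θ / 2 ≤ φ ∧ φ ≤ φ₀ + θ / 2 ∧
    z = (r : ℂ) * Complex.exp ((φ : ℂ) * Complex.I)}

/-!
The exponential maps the strip `|im w - φ₀| ≤ θ / 2` onto the sector minus its vertex and sends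
`re w → -∞` to the vertex and `re w → ∞` to infinity. Near the vertex `f` is bounded by continuity,
while at infinity growth of order `exp (β * ‖z‖ ^ γ)` becomes `exp (β * exp (γ * re w))`. Hence
`f ∘ exp` falls under the Phragmén–Lindelöf principle in a strip of width `θ`, whose condition on
the exponent is exactly `γ < π / θ`.
-/

section

open Asymptotics Bornology Complex Filter Set

open scoped Topology

theorem isBigO_exp_rpow_comp_exp {E : Type*} [Norm E] {f : ℂ → E} {S T : Set ℂ} {β γ : ℝ}
    (hST : MapsTo exp S T) (hzero : f =O[𝓝[T] 0] fun _ ↦ (1 : ℝ))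
    (hinfty : f =O[cobounded ℂ ⊓ 𝓟 T] fun z ↦ Real.exp (β * ‖z‖ ^ γ)) :
    (f ∘ exp) =O[comap (abs ∘ re) atTop ⊓ 𝓟 S]
      fun w ↦ Real.exp (|β| * Real.exp (γ * |w.re|)) := by
  have hbot : (f ∘ exp) =O[comap re atBot ⊓ 𝓟 S]
      fun w ↦ Real.exp (|β| * Real.exp (γ * |w.re|)) := by
    refine (hzero.comp_tendsto (tendsto_exp_comap_re_atBot.inf hST.tendsto)).trans
      (isBigO_of_le _ fun w ↦ ?_)
    rw [Function.comp_apply, norm_one, Real.norm_of_nonneg (Real.exp_pos _).le, Real.one_le_exp_iff]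
    positivity
  have htop : (f ∘ exp) =O[comap re atTop ⊓ 𝓟 S]
      fun w ↦ Real.exp (|β| * Real.exp (γ * |w.re|)) := by
    refine (hinfty.comp_tendsto (tendsto_exp_comap_re_atTop.inf hST.tendsto)).trans
      (.of_norm_eventuallyLE ?_)
    have hre : ∀ᶠ w in comap re atTop ⊓ 𝓟 S, 0 ≤ w.re :=
      (tendsto_comap.mono_left inf_le_left).eventually_ge_atTop 0
    filter_upwards [hre] with w hw
    rw [Function.comp_apply, Real.norm_of_nonneg (Real.exp_pos _).le, norm_exp, ← Real.exp_mul,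
      mul_comm w.re, abs_of_nonneg hw]
    gcongr
    exact le_abs_self β
  rw [← comap_comap, comap_abs_atTop, comap_sup, inf_sup_right]
  exact hbot.sup htop

theorem exp_eq_ofReal_exp_re_mul_exp_im_mul_I (w : ℂ) :
    exp w = (Real.exp w.re : ℂ) * exp (w.im * I) := by
  rw [ofReal_exp, ← exp_add, re_add_im]

variable {φ₀ θ : ℝ}

theorem exp_image_im_Icc_eq_angularSector_sdiff_zero :
    exp '' (im ⁻¹' Icc (φ₀ - θ / 2) (φ₀ + θ / 2)) = angularSector φ₀ θ \ {0} := by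
  ext z
  constructor
  · rintro ⟨w, hw, rfl⟩
    exact ⟨⟨Real.exp w.re, w.im, (Real.exp_pos _).le, hw.1, hw.2,
      exp_eq_ofReal_exp_re_mul_exp_im_mul_I w⟩, exp_ne_zero w⟩
  · rintro ⟨⟨r, φ, hr, hφ₁, hφ₂, rfl⟩, hne⟩
    have hr_pos : 0 < r := hr.lt_of_ne' fun h ↦ hne (by simp [h])
    refine ⟨Real.log r + φ * I, by simpa only [mem_preimage, add_im, ofReal_im, im_ofReal_mul, I_im,
      mul_one, zero_add] using ⟨hφ₁, hφ₂⟩, ?_⟩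
    rw [exp_add, ← ofReal_exp, Real.exp_log hr_pos]

theorem mapsTo_exp_angularSector :
    MapsTo exp (im ⁻¹' Icc (φ₀ - θ / 2) (φ₀ + θ / 2)) (angularSector φ₀ θ) :=
  mapsTo_iff_image_subset.2
    (exp_image_im_Icc_eq_angularSector_sdiff_zero.trans_subset sdiff_subset)

theorem mapsTo_exp_interior_angularSector :
    MapsTo exp (im ⁻¹' Ioo (φ₀ - θ / 2) (φ₀ + θ / 2)) (interior (angularSector φ₀ θ)) :=
  mapsTo_iff_image_subset.2 <| interior_maximal
    (mapsTo_exp_angularSector.mono_left (preimage_mono Ioo_subset_Icc_self)).image_subset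
    (isOpenMap_exp _ (isOpen_Ioo.preimage continuous_im))

theorem zero_mem_angularSector_of_nonempty (h : (angularSector φ₀ θ).Nonempty) :
    (0 : ℂ) ∈ angularSector φ₀ θ := by
  obtain ⟨_, _, φ, _, hφ₁, hφ₂, _⟩ := h
  exact ⟨0, φ, le_rfl, hφ₁, hφ₂, by simp⟩

variable {X : Type*} [NormedAddCommGroup X] [NormedSpace ℂ X] {f : ℂ → X}

theorem diffContOnCl_comp_exp_im_Ioo
    (hdiff : DifferentiableOn ℂ f (interior (angularSector φ₀ θ)))
    (hcont : ContinuousOn f (angularSector φ₀ θ)) :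
    DiffContOnCl ℂ (f ∘ exp) (im ⁻¹' Ioo (φ₀ - θ / 2) (φ₀ + θ / 2)) where
  differentiableOn :=
    hdiff.comp differentiable_exp.differentiableOn mapsTo_exp_interior_angularSector
  continuousOn := by
    refine hcont.comp continuous_exp.continuousOn (mapsTo_exp_angularSector.mono_left ?_)
    rw [closure_preimage_im]
    exact preimage_mono (closure_minimal Ioo_subset_Icc_self isClosed_Icc)

theorem phragmen_lindelof_sector_general {C β γ : ℝ}
    (hdiff : DifferentiableOn ℂ f (interior (angularSector φ₀ θ)))
    (hcont : ContinuousOn f (angularSector φ₀ θ))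
    (hlower : ∀ r : ℝ, 0 ≤ r → ‖f (r * exp ((φ₀ - θ / 2 : ℝ) * I))‖ ≤ C)
    (hupper : ∀ r : ℝ, 0 ≤ r → ‖f (r * exp ((φ₀ + θ / 2 : ℝ) * I))‖ ≤ C)
    (hγ : γ < Real.pi / θ)
    (hgrowth : f =O[cobounded ℂ ⊓ 𝓟 (interior (angularSector φ₀ θ))]
      fun z ↦ Real.exp (β * ‖z‖ ^ γ)) :
    ∀ z ∈ angularSector φ₀ θ, ‖f z‖ ≤ C := by
  intro z hz
  rcases eq_or_ne z 0 with rfl | hne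
  · simpa using hlower 0 le_rfl
  obtain ⟨w, hw, rfl⟩ := exp_image_im_Icc_eq_angularSector_sdiff_zero.superset ⟨hz, hne⟩
  have hvertex : f =O[𝓝[interior (angularSector φ₀ θ)] 0] fun _ ↦ (1 : ℝ) :=
    ((hcont 0 (zero_mem_angularSector_of_nonempty ⟨_, hz⟩)).mono interior_subset).isBigO_one ℝ
  have hwidth : γ < Real.pi / (φ₀ + θ / 2 - (φ₀ - θ / 2)) := by
    rwa [add_sub_sub_cancel, add_halves]
  change ‖(f ∘ exp) w‖ ≤ C
  refine PhragmenLindelof.horizontal_strip (diffContOnCl_comp_exp_im_Ioo hdiff hcont)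
    ⟨γ, hwidth, |β|,
      isBigO_exp_rpow_comp_exp mapsTo_exp_interior_angularSector hvertex hgrowth⟩
    (fun ζ hζ ↦ ?_) (fun ζ hζ ↦ ?_) hw.1 hw.2
  · rw [Function.comp_apply, exp_eq_ofReal_exp_re_mul_exp_im_mul_I, hζ]
    exact hlower _ (Real.exp_pos _).le
  · rw [Function.comp_apply, exp_eq_ofReal_exp_re_mul_exp_im_mul_I, hζ]
    exact hupper _ (Real.exp_pos _).le

end

/-- **Phragmén–Lindelöf theorem for sectors** (Banach-space-valued).
Let `W` be the closed sector of angular extent `θ > 0` with vertex at the origin, and let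
`f` be holomorphic in the interior of `W`, continuous on `W`, bounded by `C` on the two
boundary half-lines of `W`, and of growth at most `α · exp (β · |z|^γ)` on `W` for some
`0 < γ < π/θ`. Then `‖f z‖ ≤ C` throughout `W`. -/
theorem phragmen_lindelof_sector
    {X : Type*} [NormedAddCommGroup X] [NormedSpace ℂ X] [CompleteSpace X]
    (φ₀ θ : ℝ) (hθ : 0 < θ) (f : ℂ → X)
    (hdiff : DifferentiableOn ℂ f (interior (angularSector φ₀ θ)))
    (hcont : ContinuousOn f (angularSector φ₀ θ))
    (C : ℝ)
    (hedge : ∀ r : ℝ, 0 ≤ r →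
      ‖f ((r : ℂ) * Complex.exp (((φ₀ - θ / 2 : ℝ) : ℂ) * Complex.I))‖ ≤ C ∧
      ‖f ((r : ℂ) * Complex.exp (((φ₀ + θ / 2 : ℝ) : ℂ) * Complex.I))‖ ≤ C)
    (α β γ : ℝ) (hγ0 : 0 < γ) (hγ : γ < Real.pi / θ)
    (hgrowth : ∀ z ∈ angularSector φ₀ θ, ‖f z‖ ≤ α * Real.exp (β * ‖z‖ ^ γ)) :
    ∀ z ∈ angularSector φ₀ θ, ‖f z‖ ≤ C :=
  phragmen_lindelof_sector_general hdiff hcont (fun r hr ↦ (hedge r hr).1)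
    (fun r hr ↦ (hedge r hr).2) hγ <| .of_bound α <| Filter.eventually_inf_principal.2 <|
      .of_forall fun z hz ↦ by simpa using hgrowth z (interior_subset hz)
end
end

section
/- Let X be a complex Banach space and let h : ℂ → X be continuous on the closed right half-plane {z : Re z ≥ 0} and complex-differentiable on the open right half-plane {z : Re z > 0}. Suppose there is a constant γ ≥ 0 such that ‖h(z)‖ ≤ γ · exp(−π |Im z|) for all z with Re z ≥ 0. Then h(z) = 0 for all z with Re z ≥ 0. -/
/-!
On the imaginary axis `|z ^ (-k z)| = exp (k π |Im z| / 2)`, so for `k = 2 δ / π` multiplication by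
`z ^ (-k z)` exactly uses up a decay of rate `δ` there. In the right half-plane this factor is of
exponential type, while on the positive real axis `x ^ (-k x)` beats every exponential. Hence
`z ^ (-k z) • f z` falls under the Phragmen-Lindelöf uniqueness theorem for functions with
superexponential decay along the real axis.
-/

open Asymptotics Bornology Filter Set

section SelfPower

theorem continuousAt_mul_clog_zero : ContinuousAt (fun z : ℂ => z * Complex.log z) 0 := by
  have norm_le (z : ℂ) :
      ‖z * Complex.log z‖ ≤ |‖z‖ * Real.log ‖z‖| + ‖z‖ * Real.pi := calc
    ‖z * Complex.log z‖ ≤ ‖z‖ * (|(Complex.log z).re| + |(Complex.log z).im|) := by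
      rw [norm_mul]
      gcongr
      exact Complex.norm_le_abs_re_add_abs_im _
    _ ≤ ‖z‖ * (|Real.log ‖z‖| + Real.pi) := by
      rw [Complex.log_re, Complex.log_im]
      gcongr
      exact Complex.abs_arg_le_pi z
    _ = |‖z‖ * Real.log ‖z‖| + ‖z‖ * Real.pi := by rw [abs_mul, abs_norm, mul_add]
  have bound_continuous : Continuous fun z : ℂ => |‖z‖ * Real.log ‖z‖| + ‖z‖ * Real.pi :=
    (Real.continuous_mul_log.comp continuous_norm).abs.add (by fun_prop)
  rw [ContinuousAt, zero_mul]
  exact squeeze_zero_norm norm_le (bound_continuous.tendsto' 0 0 (by simp))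

theorem cpow_mul_self_eq_exp (a z : ℂ) :
    z ^ (a * z) = Complex.exp (a * (z * Complex.log z)) := by
  rcases eq_or_ne z 0 with rfl | hz
  · simp
  · rw [Complex.cpow_def_of_ne_zero hz]
    ring_nf

theorem cpow_mul_self_ne_zero (a z : ℂ) : z ^ (a * z) ≠ 0 :=
  cpow_mul_self_eq_exp a z ▸ Complex.exp_ne_zero _

theorem diffContOnCl_cpow_mul_self (a : ℂ) :
    DiffContOnCl ℂ (fun z : ℂ => z ^ (a * z)) {z | 0 < z.re} := by
  simp only [cpow_mul_self_eq_exp]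
  have differentiableAt_mul_log {z : ℂ} (hz : z ∈ Complex.slitPlane) :
      DifferentiableAt ℂ (fun z => z * Complex.log z) z :=
    differentiableAt_id.mul (Complex.differentiableAt_log hz)
  refine ⟨fun z hz => ?_, fun z hz => ?_⟩
  · exact ((differentiableAt_mul_log (.inl hz)).const_mul a).cexp.differentiableWithinAt
  · rw [Complex.closure_setOfPred_lt_re] at hz
    have continuousAt_mul_log : ContinuousAt (fun z => z * Complex.log z) z := by
      rcases eq_or_ne z 0 with rfl | hz₀
      · exact continuousAt_mul_clog_zero
      · have mem_slitPlane : z ∈ Complex.slitPlane := hz.lt_or_eq.imp id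
          fun re_zero im_zero => hz₀ (Complex.ext re_zero.symm im_zero)
        exact (differentiableAt_mul_log mem_slitPlane).continuousAt
    exact (continuousAt_mul_log.const_mul a).cexp.continuousWithinAt

variable {k : ℝ}

theorem norm_cpow_neg_mul_self_le (hk : 0 ≤ k) {z : ℂ} (hz : 0 ≤ z.re) :
    ‖z ^ (-k * z)‖ ≤ ‖z‖ ^ (-k * z.re) * Real.exp (k * (Real.pi / 2) * |z.im|) := by
  have arg_mul_im_le : z.arg * z.im ≤ Real.pi / 2 * |z.im| := calc
    z.arg * z.im ≤ |z.arg| * |z.im| := (le_abs_self _).trans_eq (abs_mul _ _)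
    _ ≤ Real.pi / 2 * |z.im| := by
      gcongr
      exact Complex.abs_arg_le_pi_div_two_iff.2 hz
  calc ‖z ^ (-k * z)‖
      = ‖z‖ ^ (-k * z.re) * Real.exp (k * (z.arg * z.im)) := by
        rw [Complex.norm_cpow_of_imp (by rintro rfl; simp), div_eq_mul_inv, ← Real.exp_neg,
          ← Complex.ofReal_neg, Complex.re_ofReal_mul, Complex.im_ofReal_mul]
        ring_nf
    _ ≤ ‖z‖ ^ (-k * z.re) * Real.exp (k * (Real.pi / 2) * |z.im|) := by
      rw [mul_assoc k]
      gcongr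

theorem norm_cpow_neg_mul_self_mul_I_le (hk : 0 ≤ k) (y : ℝ) :
    ‖(y * Complex.I) ^ (-k * (y * Complex.I))‖ ≤ Real.exp (k * (Real.pi / 2) * |y|) := by
  simpa using norm_cpow_neg_mul_self_le hk (z := y * Complex.I) (by simp)

theorem isBigO_cpow_neg_mul_self (hk : 0 ≤ k) :
    (fun z : ℂ => z ^ (-k * z)) =O[cobounded ℂ ⊓ 𝓟 {z | 0 < z.re}]
      fun z => Real.exp (k * (Real.pi / 2) * ‖z‖) := by
  refine .of_norm_eventuallyLE ?_
  filter_upwards [(eventually_cobounded_le_norm 1).filter_mono inf_le_left,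
    mem_inf_of_right (mem_principal_self _)] with z one_le_norm re_pos
  replace re_pos : 0 < z.re := re_pos
  calc ‖z ^ (-k * z)‖
      ≤ ‖z‖ ^ (-k * z.re) * Real.exp (k * (Real.pi / 2) * |z.im|) :=
        norm_cpow_neg_mul_self_le hk re_pos.le
    _ ≤ 1 * Real.exp (k * (Real.pi / 2) * ‖z‖) := by
      gcongr
      · exact Real.rpow_le_one_of_one_le_of_nonpos one_le_norm
          (mul_nonpos_of_nonpos_of_nonneg (neg_nonpos.2 hk) re_pos.le)
      · exact Complex.abs_im_le_norm z
    _ = Real.exp (k * (Real.pi / 2) * ‖z‖) := one_mul _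

theorem isBigO_rpow_neg_mul_self_exp (hk : 0 < k) (b : ℝ) :
    (fun x : ℝ => x ^ (-k * x)) =O[atTop] fun x => Real.exp (b * x) := by
  refine .of_norm_eventuallyLE ?_
  filter_upwards [eventually_gt_atTop 0, Real.tendsto_log_atTop.eventually_ge_atTop (-b / k)]
    with x x_pos log_ge
  rw [Real.norm_of_nonneg (by positivity), Real.rpow_def_of_pos x_pos]
  refine Real.exp_le_exp.2 ?_
  rw [div_le_iff₀ hk] at log_ge
  linarith [mul_le_mul_of_nonneg_right log_ge x_pos.le]

end SelfPower

section HalfPlane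

variable {E : Type*} [NormedAddCommGroup E] {f : ℂ → E}

theorem isBigO_comp_ofReal_of_isBigO_exp_norm {B : ℝ}
    (hf : f =O[cobounded ℂ ⊓ 𝓟 {z | 0 < z.re}] fun z => Real.exp (B * ‖z‖)) :
    (fun x : ℝ => f x) =O[atTop] fun x => Real.exp (B * x) := by
  have tendsto_ofReal : Tendsto ((↑) : ℝ → ℂ) atTop (cobounded ℂ ⊓ 𝓟 {z | 0 < z.re}) :=
    tendsto_inf.2 ⟨RCLike.tendsto_ofReal_atTop_cobounded ℂ, tendsto_principal.2 <|
      (eventually_gt_atTop 0).mono fun x hx => by simpa using hx⟩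
  refine (hf.comp_tendsto tendsto_ofReal).congr' .rfl ?_
  filter_upwards [eventually_ge_atTop 0] with x hx
  simp [abs_of_nonneg hx]

variable [NormedSpace ℂ E]

theorem superpolynomialDecay_norm_cpow_neg_mul_self_smul {f : ℝ → E} {k B : ℝ}
    (hk : 0 < k) (hf : f =O[atTop] fun x => Real.exp (B * x)) :
    SuperpolynomialDecay atTop Real.exp fun x : ℝ => ‖(x : ℂ) ^ (-k * x : ℂ) • f x‖ := by
  rw [superpolynomialDecay_iff_isBigO _ Real.tendsto_exp_atTop]
  intro n
  have factor_isBigO : (fun x : ℝ => (x : ℂ) ^ (-k * x : ℂ)) =O[atTop]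
      fun x => Real.exp ((n - B) * x) := by
    refine .of_norm_left ((isBigO_rpow_neg_mul_self_exp hk (n - B)).congr' ?_ .rfl)
    filter_upwards [eventually_gt_atTop 0] with x x_pos
    simp [Complex.norm_cpow_eq_rpow_re_of_pos x_pos]
  refine (factor_isBigO.smul hf).norm_left.congr_right fun x => ?_
  rw [smul_eq_mul, ← Real.exp_add, ← Real.rpow_intCast, ← Real.exp_mul]
  ring_nf

theorem eq_zero_of_exp_decay_half_plane_general (hd : DiffContOnCl ℂ f {z | 0 < z.re})
    (hexp : ∃ B, f =O[cobounded ℂ ⊓ 𝓟 {z | 0 < z.re}] fun z => Real.exp (B * ‖z‖))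
    {C δ : ℝ} (hδ : 0 < δ) (him : ∀ y : ℝ, ‖f (y * Complex.I)‖ ≤ C * Real.exp (-δ * |y|)) :
    EqOn f 0 {z | 0 ≤ z.re} := by
  obtain ⟨B, hB⟩ := hexp
  obtain ⟨k, hk, hkδ⟩ : ∃ k : ℝ, 0 < k ∧ k * (Real.pi / 2) = δ :=
    ⟨δ / (Real.pi / 2), by positivity, by field_simp⟩
  have damped_eq_zero : EqOn (fun z : ℂ => z ^ (-k * z) • f z) 0 {z | 0 ≤ z.re} := by
    refine PhragmenLindelof.eq_zero_on_right_half_plane_of_superexponential_decay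
      ((diffContOnCl_cpow_mul_self _).smul hd) ⟨1, one_lt_two, δ + B, ?_⟩
      (superpolynomialDecay_norm_cpow_neg_mul_self_smul hk
        (isBigO_comp_ofReal_of_isBigO_exp_norm hB))
      ⟨C, fun y => ?_⟩
    · refine ((isBigO_cpow_neg_mul_self hk.le).smul hB).congr_right fun z => ?_
      rw [hkδ, smul_eq_mul, ← Real.exp_add, Real.rpow_one, add_mul]
    · calc ‖(y * Complex.I) ^ (-k * (y * Complex.I)) • f (y * Complex.I)‖
          ≤ Real.exp (δ * |y|) * (C * Real.exp (-δ * |y|)) := by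
            rw [norm_smul, ← hkδ]
            gcongr
            · exact norm_cpow_neg_mul_self_mul_I_le hk.le y
            · exact hkδ ▸ him y
        _ = C := by
          rw [mul_left_comm, ← Real.exp_add, neg_mul, add_neg_cancel, Real.exp_zero, mul_one]
  exact fun z hz => (smul_eq_zero.1 (damped_eq_zero hz)).resolve_left (cpow_mul_self_ne_zero _ z)

end HalfPlane

/-- A function continuous on the closed right half-plane, holomorphic on the open right
half-plane, and decaying like `γ · exp (-π |Im z|)` there, vanishes identically on the
closed right half-plane. -/
theorem eq_zero_of_exp_decay_half_plane
    {X : Type*} [NormedAddCommGroup X] [NormedSpace ℂ X] [CompleteSpace X]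
    (h : ℂ → X)
    (hcont : ContinuousOn h {z : ℂ | 0 ≤ z.re})
    (hdiff : DifferentiableOn ℂ h {z : ℂ | 0 < z.re})
    (γ : ℝ) (hγ : 0 ≤ γ)
    (hbound : ∀ z : ℂ, 0 ≤ z.re → ‖h z‖ ≤ γ * Real.exp (-Real.pi * |z.im|)) :
    ∀ z : ℂ, 0 ≤ z.re → h z = 0 := by
  have h_isBigO : h =O[𝓟 {z | 0 < z.re}] fun z => Real.exp (0 * ‖z‖) := by
    refine .of_bound γ (eventually_principal.2 fun z hz => (hbound z hz.le).trans ?_)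
    gcongr
    simpa using by positivity
  exact eq_zero_of_exp_decay_half_plane_general
    ⟨hdiff, by rwa [Complex.closure_setOfPred_lt_re]⟩ ⟨0, h_isBigO.mono inf_le_right⟩
    Real.pi_pos fun y => by simpa using hbound (y * Complex.I) (by simp)
end
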